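/- arXiv:2206.04612 — 2 statements merged into one kernel-verified Lean document; each statement's English description precedes it below -/
import Mathlib

section
/- Let (X, ω) be a weighted simplicial complex and R = 𝔽[[π]]. Then for every n ≥ 1, the weighted boundary maps satisfy ∂_n^v ∘ ∂_{n+1}^v = 0; that is, (C_•(X; R), ∂_•^v) is a chain complex of R-modules. -/
/-!
By linearity it suffices to treat one simplex `σ` with at least three vertices. Then `∂ᵛ ∂ᵛ σ` is a
sum over ordered pairs `(x, y)` of distinct vertices of `σ`, the term being supported on
`σ \ {x, y}`. Its power of `π` telescopes to `ω (σ \ {x, y}) - ω σ`, because the weights increase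
along `σ ⊇ σ \ {x} ⊇ σ \ {x, y}`, so it is symmetric in `x` and `y`. The sign is antisymmetric, as
in the unweighted case (`neg_one_pow_vIdx_swap`), and the terms for `(x, y)` and `(y, x)` cancel.
-/

open Finset

variable {V : Type*} [LinearOrder V]

/-- The `n`-cells (simplices on `n+1` vertices) of a collection `S` of finite sets. -/
def nCells (S : Finset (Finset V)) (n : ℕ) : Finset (Finset V) :=
  S.filter fun σ => σ.card = n + 1

/-- The position of the vertex `x` in the simplex `σ` (number of smaller vertices). -/
def vIdx (σ : Finset V) (x : V) : ℕ := (σ.filter fun y => y < x).card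

/-- The unweighted simplicial boundary operator (on all degrees at once), with
coefficients in a commutative ring `A`; it sends a `0`-simplex to `0`. -/
noncomputable def bdry (A : Type*) [CommRing A] :
    (Finset V →₀ A) →ₗ[A] (Finset V →₀ A) :=
  Finsupp.lsum A fun σ =>
    LinearMap.toSpanSingleton A _
      (if 2 ≤ σ.card then
        ∑ x ∈ σ, ((-1 : A) ^ vIdx σ x) • Finsupp.single (σ.erase x) (1 : A)
      else 0)

/-- The weighted simplicial boundary operator over `R = 𝔽[[π]]` (with `π = PowerSeries.X`),
for the simplex-weight function `w`. -/
noncomputable def wBdry (F : Type*) [Field F] (w : Finset V → ℕ) :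
    (Finset V →₀ PowerSeries F) →ₗ[PowerSeries F] (Finset V →₀ PowerSeries F) :=
  Finsupp.lsum (PowerSeries F) fun σ =>
    LinearMap.toSpanSingleton (PowerSeries F) _
      (if 2 ≤ σ.card then
        ∑ x ∈ σ, ((-1 : PowerSeries F) ^ vIdx σ x *
            (PowerSeries.X : PowerSeries F) ^ (w (σ.erase x) - w σ)) •
          Finsupp.single (σ.erase x) (1 : PowerSeries F)
      else 0)

/-- A weighted simplicial complex `(X, ω)`: a finite abstract simplicial complex together
with a weight function `ω` that is antitone with respect to inclusion of simplices. -/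
structure WeightedComplex (V : Type*) [LinearOrder V] where
  simplices : Finset (Finset V)
  nonempty_mem : ∀ σ ∈ simplices, σ.Nonempty
  down_closed : ∀ σ ∈ simplices, ∀ τ : Finset V, τ ⊆ σ → τ.Nonempty → τ ∈ simplices
  w : Finset V → ℕ
  w_mono : ∀ σ ∈ simplices, ∀ μ ∈ simplices, σ ⊆ μ → w μ ≤ w σ

theorem vIdx_erase_of_lt {σ : Finset V} {x y : V} (hx : x ∈ σ) (hxy : x < y) :
    vIdx (σ.erase x) y + 1 = vIdx σ y := by
  unfold vIdx
  rw [Finset.filter_erase]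
  exact Finset.card_erase_add_one (by simp [hx, hxy])

theorem vIdx_erase_of_gt {σ : Finset V} {x y : V} (hxy : x < y) :
    vIdx (σ.erase y) x = vIdx σ x := by
  unfold vIdx
  rw [Finset.filter_erase, Finset.erase_eq_of_notMem]
  simp [hxy.le]

/-- Removing two vertices of `σ` in the two possible orders gives opposite signs: removing the
smaller vertex first shifts the position of the larger one by one, and not conversely. -/
theorem neg_one_pow_vIdx_swap {A : Type*} [CommRing A] {σ : Finset V} {x y : V}
    (hx : x ∈ σ) (hy : y ∈ σ) (hne : x ≠ y) :
    (-1 : A) ^ vIdx σ x * (-1) ^ vIdx (σ.erase x) y =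
      -((-1) ^ vIdx σ y * (-1) ^ vIdx (σ.erase y) x) := by
  rcases lt_or_gt_of_ne hne with h | h
  · rw [vIdx_erase_of_gt h, ← vIdx_erase_of_lt hx h]
    ring
  · rw [vIdx_erase_of_gt h, ← vIdx_erase_of_lt hy h]
    ring

theorem wBdry_single (F : Type*) [Field F] (w : Finset V → ℕ) {σ : Finset V}
    (hσ : 2 ≤ σ.card) (a : PowerSeries F) :
    wBdry F w (Finsupp.single σ a) =
      a • ∑ x ∈ σ, ((-1 : PowerSeries F) ^ vIdx σ x *
            (PowerSeries.X : PowerSeries F) ^ (w (σ.erase x) - w σ)) •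
          Finsupp.single (σ.erase x) (1 : PowerSeries F) := by
  rw [wBdry, Finsupp.lsum_single, LinearMap.toSpanSingleton_apply, if_pos hσ]

/-- The identity `∂ᵛ ∂ᵛ σ = 0` for one simplex; only the weights of `σ` and of its faces obtained
by removing one or two vertices matter. -/
theorem wBdry_wBdry_single (F : Type*) [Field F] (w : Finset V → ℕ) {σ : Finset V}
    (hσ : 3 ≤ σ.card) (a : PowerSeries F)
    (h₁ : ∀ x ∈ σ, w σ ≤ w (σ.erase x))
    (h₂ : ∀ x ∈ σ, ∀ y ∈ σ.erase x, w (σ.erase x) ≤ w ((σ.erase x).erase y)) :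
    wBdry F w (wBdry F w (Finsupp.single σ a)) = 0 := by
  rw [wBdry_single F w (by omega), map_smul, map_sum]
  have key : ∀ x ∈ σ, wBdry F w (((-1 : PowerSeries F) ^ vIdx σ x *
        (PowerSeries.X : PowerSeries F) ^ (w (σ.erase x) - w σ)) •
          Finsupp.single (σ.erase x) (1 : PowerSeries F)) =
      ∑ y ∈ σ.erase x, (((-1 : PowerSeries F) ^ vIdx σ x * (-1) ^ vIdx (σ.erase x) y) *
        (PowerSeries.X : PowerSeries F) ^ (w ((σ.erase x).erase y) - w σ)) •
          Finsupp.single ((σ.erase x).erase y) (1 : PowerSeries F) := by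
    intro x hx
    have hcard := Finset.card_erase_add_one hx
    rw [map_smul, wBdry_single F w (by omega), one_smul, Finset.smul_sum]
    refine Finset.sum_congr rfl fun y hy => ?_
    have e : w ((σ.erase x).erase y) - w σ =
        (w (σ.erase x) - w σ) + (w ((σ.erase x).erase y) - w (σ.erase x)) := by
      have := h₁ x hx
      have := h₂ x hx y hy
      omega
    rw [smul_smul, e, pow_add]
    congr 1
    ring
  rw [Finset.sum_congr rfl key, Finset.sum_sigma']
  -- The terms indexed by `(x, y)` and `(y, x)` cancel.
  rw [Finset.sum_involution (fun p _ => ⟨p.2, p.1⟩), smul_zero]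
  · rintro ⟨x, y⟩ hp
    simp only [Finset.mem_sigma, Finset.mem_erase] at hp
    obtain ⟨hx, hyx, hy⟩ := hp
    simp only
    rw [neg_one_pow_vIdx_swap hx hy hyx.symm, Finset.erase_right_comm, neg_mul, neg_smul,
      neg_add_cancel]
  · rintro ⟨x, y⟩ hp _ heq
    simp only [Finset.mem_sigma, Finset.mem_erase] at hp
    exact hp.2.1 (congrArg Sigma.fst heq)
  · rintro ⟨x, y⟩ hp
    simp only [Finset.mem_sigma, Finset.mem_erase] at hp ⊢
    exact ⟨hp.2.2, hp.2.1.symm, hp.1⟩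
  · rintro ⟨x, y⟩ _
    rfl

/-- For a weighted simplicial complex `(X, ω)` over `R = 𝔽[[π]]` and every
`n ≥ 1`, the weighted boundary maps satisfy `∂ₙᵛ ∘ ∂ₙ₊₁ᵛ = 0`: applying the weighted boundary
twice to any chain in `C_{n+1}(X; R)` gives `0`.  Thus `(C_•(X; R), ∂_•ᵛ)` is a chain complex. -/
theorem weighted_boundary_comp_eq_zero
    (F : Type*) [Field F] (K : WeightedComplex V) (n : ℕ) (hn : 1 ≤ n)
    (c : Finset V →₀ PowerSeries F)
    (hc : c.support ⊆ nCells K.simplices (n + 1)) :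
    wBdry F K.w (wBdry F K.w c) = 0 := by
  rw [← Finsupp.sum_single c, Finsupp.sum, map_sum, map_sum]
  refine Finset.sum_eq_zero fun σ hσ => ?_
  obtain ⟨hσK, hcard⟩ := Finset.mem_filter.mp (hc hσ)
  have hmem₁ : ∀ x ∈ σ, σ.erase x ∈ K.simplices := fun x hx =>
    K.down_closed σ hσK _ (Finset.erase_subset _ _) (Finset.card_pos.mp (by
      have := Finset.card_erase_add_one hx
      omega))
  have hmem₂ : ∀ x ∈ σ, ∀ y ∈ σ.erase x, (σ.erase x).erase y ∈ K.simplices := fun x hx y hy =>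
    K.down_closed _ (hmem₁ x hx) _ (Finset.erase_subset _ _) (Finset.card_pos.mp (by
      have := Finset.card_erase_add_one hx
      have := Finset.card_erase_add_one hy
      omega))
  exact wBdry_wBdry_single F K.w (by omega) _
    (fun x hx => K.w_mono _ (hmem₁ x hx) _ hσK (Finset.erase_subset _ _))
    (fun x hx y hy => K.w_mono _ (hmem₂ x hx y hy) _ (hmem₁ x hx) (Finset.erase_subset _ _))
end

section
/- Let (X, ω) be a weighted simplicial complex and let K, M, {β_κ : κ ∈ K} be a distinguished basis in the sense of Lemma 1. Then {∂_n^v(μ) : μ ∈ M} is an R-basis of the image ∂_n^v(C_n(X; R)); in particular these elements are R-linearly independent and span Im ∂_n^v over R. -/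
/-!
The proof compares `∂ᵛ` with the unweighted boundary through the diagonal rescaling
`τ ↦ π ^ ω(τ) τ`: for a simplex `σ` of the complex,
`π ^ ω(σ) * (∂ᵛ σ)_τ = π ^ ω(τ) * (∂ σ)_τ` for every face `τ` (`X_pow_mul_wBdry_apply`).

Independence: a relation among the `∂ᵛ μ`, multiplied by a large power of `π` and divided by
`π ^ ω(τ)` in each coordinate `τ`, becomes a relation over `𝔽[[π]]` among the vectors `∂ μ`, which
have entries in `𝔽`; each power-series coefficient of it is a relation over `𝔽`.

Spanning: since `κ` has minimal weight in the support of the cycle `β_κ`, the exponents in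
`∑ β_κ(σ) π ^ (ω(σ) - ω(κ)) ∂ᵛ σ` are honest, and `π ^ ω(κ)` times this sum is the rescaling
of `∂ β_κ = 0`. As `β_κ(κ) = 1`, this expresses `∂ᵛ κ` through the `∂ᵛ μ`, `μ ∈ M`
(`wBdry_single_eq_neg_sum`).
-/

open Finset

variable {V : Type*} [LinearOrder V]

/-- On simplices of the complex, the weighted boundary is the conjugate of the unweighted one by
the rescaling `τ ↦ π ^ ω(τ) τ`, written here coordinatewise and without denominators. -/
lemma X_pow_mul_wBdry_apply (F : Type*) [Field F] (K : WeightedComplex V)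
    {σ : Finset V} (hσ : σ ∈ K.simplices) (τ : Finset V) :
    (PowerSeries.X : PowerSeries F) ^ K.w σ *
        wBdry (V := V) F K.w (Finsupp.single σ 1) τ =
      PowerSeries.X ^ K.w τ *
        PowerSeries.C (bdry (V := V) F (Finsupp.single σ 1) τ) := by
  by_cases h : 2 ≤ σ.card
  · simp only [wBdry, bdry, Finsupp.lsum_single, LinearMap.toSpanSingleton_apply, one_smul,
      if_pos h, Finsupp.finsetSum_apply, Finsupp.smul_apply, smul_eq_mul, map_sum,
      Finset.mul_sum]
    refine Finset.sum_congr rfl fun x hx => ?_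
    by_cases hτ : σ.erase x = τ
    · subst hτ
      have hne : (σ.erase x).Nonempty := by
        rw [← Finset.card_pos, Finset.card_erase_of_mem hx]
        omega
      have hw : K.w σ ≤ K.w (σ.erase x) :=
        K.w_mono _ (K.down_closed σ hσ _ (Finset.erase_subset _ _) hne) _ hσ
          (Finset.erase_subset _ _)
      simp only [Finsupp.single_eq_same, mul_one, map_pow, map_neg, map_one]
      rw [mul_left_comm, ← pow_add, Nat.add_sub_cancel' hw, mul_comm]
    · simp [hτ]
  · simp [wBdry, bdry, h]

lemma linearIndependent_wBdry (F : Type*) [Field F] (K : WeightedComplex V)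
    {M : Finset (Finset V)} (hM : M ⊆ K.simplices)
    (hMind : LinearIndependent F
      (fun μ : ↥M => bdry (V := V) F (Finsupp.single (↑μ : Finset V) (1 : F)))) :
    LinearIndependent (PowerSeries F)
      (fun μ : ↥M => wBdry (V := V) F K.w
        (Finsupp.single (↑μ : Finset V) (1 : PowerSeries F))) := by
  rw [Fintype.linearIndependent_iff] at hMind ⊢
  intro g hg μ₀
  -- The common exponent `M.sup K.w` clears the weights of all simplices of `M`.
  have key : ∀ τ : Finset V, ∑ μ : ↥M, g μ * PowerSeries.X ^ (M.sup K.w - K.w μ) *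
      PowerSeries.C (bdry (V := V) F (Finsupp.single (↑μ : Finset V) 1) τ) = 0 := by
    intro τ
    apply mul_left_cancel₀ (pow_ne_zero (K.w τ) (PowerSeries.X_ne_zero (R := F)))
    have hτ := DFunLike.congr_fun hg τ
    simp only [Finsupp.finsetSum_apply, Finsupp.smul_apply, smul_eq_mul,
      Finsupp.coe_zero, Pi.zero_apply] at hτ
    rw [mul_zero, ← mul_zero (PowerSeries.X ^ (M.sup K.w) : PowerSeries F), ← hτ,
      Finset.mul_sum, Finset.mul_sum]
    refine Finset.sum_congr rfl fun μ _ => ?_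
    have hle : K.w μ ≤ M.sup K.w := Finset.le_sup μ.2
    have h := X_pow_mul_wBdry_apply F K (hM μ.2) τ
    calc _ = g μ * PowerSeries.X ^ (M.sup K.w - K.w μ) * (PowerSeries.X ^ K.w τ *
          PowerSeries.C (bdry (V := V) F (Finsupp.single (↑μ : Finset V) 1) τ)) := by ring
      _ = (PowerSeries.X ^ (M.sup K.w - K.w μ) * PowerSeries.X ^ K.w μ) * (g μ *
          wBdry (V := V) F K.w (Finsupp.single (↑μ : Finset V) 1) τ) := by rw [← h]; ring
      _ = _ := by rw [← pow_add, Nat.sub_add_cancel hle]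
  have hzero : g μ₀ * PowerSeries.X ^ (M.sup K.w - K.w μ₀) = 0 := by
    ext k
    refine hMind (fun μ => PowerSeries.coeff k (g μ * PowerSeries.X ^ (M.sup K.w - K.w μ)))
      ?_ μ₀
    ext τ
    have := congrArg (PowerSeries.coeff k) (key τ)
    simpa only [map_sum, PowerSeries.coeff_mul_C, map_zero, Finsupp.finsetSum_apply,
      Finsupp.smul_apply, smul_eq_mul, Finsupp.coe_zero, Pi.zero_apply] using this
  exact (mul_eq_zero.mp hzero).resolve_right (pow_ne_zero _ PowerSeries.X_ne_zero)

/-- A cycle `b = κ + ∑ μ ∈ M, b μ • μ` whose support has minimal weight at `κ` lifts to a relation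
expressing the weighted boundary of `κ` through those of the simplices in `M`. -/
lemma wBdry_single_eq_neg_sum (F : Type*) [Field F] (K : WeightedComplex V)
    {M : Finset (Finset V)} (hM : M ⊆ K.simplices) {κ : Finset V} (hκ : κ ∈ K.simplices)
    (hκM : κ ∉ M) {b : Finset V →₀ F} (hb : bdry F b = 0) (hbκ : b κ = 1)
    (hsupp : b.support ⊆ insert κ M) (hw : ∀ σ ∈ b.support, K.w κ ≤ K.w σ) :
    wBdry (V := V) F K.w (Finsupp.single κ 1) =
      -∑ μ ∈ M, (PowerSeries.C (b μ) * PowerSeries.X ^ (K.w μ - K.w κ)) •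
        wBdry (V := V) F K.w (Finsupp.single μ 1) := by
  have hsum : b = ∑ σ ∈ insert κ M, b σ • Finsupp.single σ (1 : F) := by
    conv_lhs => rw [← Finsupp.sum_single b]
    rw [Finsupp.sum_of_support_subset b hsupp _ (by simp)]
    simp
  rw [hsum, map_sum, Finset.sum_insert hκM, hbκ, one_smul] at hb
  simp only [map_smul] at hb
  rw [eq_neg_iff_add_eq_zero]
  ext1 τ
  apply mul_left_cancel₀ (pow_ne_zero (K.w κ) (PowerSeries.X_ne_zero (R := F)))
  have hτ := congrArg (fun c : F => (PowerSeries.X : PowerSeries F) ^ K.w τ * PowerSeries.C c)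
    (DFunLike.congr_fun hb τ)
  simp only [Finsupp.add_apply, Finsupp.finsetSum_apply, Finsupp.smul_apply, smul_eq_mul,
    Finsupp.coe_zero, Pi.zero_apply, map_add, map_sum, map_mul, map_zero, mul_zero,
    mul_add, Finset.mul_sum] at hτ ⊢
  rw [← hτ, X_pow_mul_wBdry_apply F K hκ]
  congr 1
  refine Finset.sum_congr rfl fun μ hμ => ?_
  by_cases h0 : b μ = 0
  · simp [h0]
  · have hle := hw μ (Finsupp.mem_support_iff.mpr h0)
    rw [mul_left_comm (PowerSeries.X ^ K.w τ), ← X_pow_mul_wBdry_apply F K (hM hμ)]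
    rw [← Nat.add_sub_cancel' hle, pow_add, Nat.add_sub_cancel' hle]
    ring

/-- Let `(X, ω)` be a weighted complex and `K`, `M`, `{β_κ : κ ∈ K}` a
distinguished basis in the sense of Lemma 1 (hypotheses below).  Then
`{∂ₙᵛ μ : μ ∈ M}` is an `R`-basis of the image `∂ₙᵛ(C_n(X; R))`: these elements are
`R`-linearly independent and span `Im ∂ₙᵛ` over `R = 𝔽[[π]]`. -/
theorem weighted_boundary_image_basis
    (F : Type*) [Field F] (K : WeightedComplex V) (n : ℕ)
    (Ks M : Finset (Finset V)) (β : Finset V → (Finset V →₀ F))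
    (hKs : Ks ⊆ nCells K.simplices n) (hMdef : M = nCells K.simplices n \ Ks)
    -- {∂ₙ μ : μ ∈ M} is an 𝔽-basis of ∂ₙ(C_n(X; 𝔽))
    (hMind : LinearIndependent F
      (fun μ : ↥M => bdry (V := V) F (Finsupp.single (↑μ : Finset V) (1 : F))))
    (hMspan : Submodule.span F ((fun μ => bdry (V := V) F (Finsupp.single μ (1 : F))) '' ↑M) =
      (Finsupp.supported F F ↑(nCells K.simplices n)).map (bdry (V := V) F))
    -- the β_κ are cycles of the distinguished form, with minimal-weight simplex κ
    (hβ : ∀ κ ∈ Ks, bdry F (β κ) = 0 ∧ β κ κ = 1 ∧ (β κ).support ⊆ insert κ M ∧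
      ∀ σ ∈ (β κ).support, K.w κ ≤ K.w σ)
    -- {β_κ : κ ∈ K} is an 𝔽-basis of ker ∂ₙ
    (hβind : LinearIndependent F (fun κ : ↥Ks => β (↑κ : Finset V)))
    (hβspan : Submodule.span F (β '' ↑Ks) =
      Finsupp.supported F F ↑(nCells K.simplices n) ⊓ LinearMap.ker (bdry (V := V) F)) :
    LinearIndependent (PowerSeries F)
        (fun μ : ↥M => wBdry (V := V) F K.w
          (Finsupp.single (↑μ : Finset V) (1 : PowerSeries F))) ∧
      Submodule.span (PowerSeries F)
          ((fun μ => wBdry (V := V) F K.w (Finsupp.single μ (1 : PowerSeries F))) '' ↑M) =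
        (Finsupp.supported (PowerSeries F) (PowerSeries F)
            ↑(nCells K.simplices n)).map (wBdry (V := V) F K.w) := by
  have hcells : nCells K.simplices n ⊆ K.simplices := Finset.filter_subset _ _
  have hMsub : M ⊆ nCells K.simplices n := hMdef ▸ Finset.sdiff_subset
  refine ⟨linearIndependent_wBdry F K (hMsub.trans hcells) hMind, ?_⟩
  rw [Finsupp.supported_eq_span_single, Submodule.map_span, ← Set.image_comp]
  refine le_antisymm (Submodule.span_mono (Set.image_mono (Finset.coe_subset.mpr hMsub))) ?_
  rw [Submodule.span_le]
  rintro _ ⟨σ, hσ, rfl⟩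
  by_cases hσM : σ ∈ M
  · exact Submodule.subset_span ⟨σ, hσM, rfl⟩
  · have hσK : σ ∈ Ks := by
      by_contra h
      exact hσM (hMdef ▸ Finset.mem_sdiff.mpr ⟨hσ, h⟩)
    obtain ⟨h1, h2, h3, h4⟩ := hβ σ hσK
    rw [Function.comp_apply, wBdry_single_eq_neg_sum F K (hMsub.trans hcells)
      (hcells hσ) hσM h1 h2 h3 h4]
    exact Submodule.neg_mem _ (Submodule.sum_mem _ fun μ hμ =>
      Submodule.smul_mem _ _ (Submodule.subset_span ⟨μ, hμ, rfl⟩))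
end
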